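/- Let α ∈ (1,2) and let z be a complex number with Re z ≥ 0. Then, with z^α the principal branch of the complex power (and 0^α = 0), z^α = (α(α−1)/Γ(2−α)) · ∫₀^∞ (e^{−zy} − 1 + zy) · y^{−α−1} dy, the integral being absolutely convergent. -/

import Mathlib

open Complex MeasureTheory

/-!
The formula is the case of order two of the Cauchy–Saalschütz representation: for
`-(n + 1) < Re s < -n` and `0 ≤ Re z`, the Mellin transform at `s` of the Taylor remainder of order
`n + 1` of `y ↦ e ^ (-z y)` is `Γ(s) z ^ (-s)`. For `0 < Re z`, integration by parts turns the
remainder of order `n + 1` at `s` into the one of order `n` at `s + 1`, which matches the functional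
equation of `Γ`; the induction starts from the Gamma integral, extended from `z > 0` to the
half-plane by the identity theorem. That integral does not converge absolutely for `Re z = 0`, but
for remainders of positive order both sides are continuous up to the imaginary axis.
-/

open Set Filter Topology Asymptotics

/-- The Taylor remainder `e ^ w - ∑_{k < n} w ^ k / k!` of the exponential at `0`; the remainder
after the linear term is `expTail 2`. -/
noncomputable def expTail (n : ℕ) (w : ℂ) : ℂ :=
  exp w - ∑ k ∈ Finset.range n, w ^ k / k.factorial

theorem expTail_zero_left (w : ℂ) : expTail 0 w = exp w := by
  simp [expTail]

theorem expTail_succ (n : ℕ) (w : ℂ) : expTail (n + 1) w = expTail n w - w ^ n / n.factorial := by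
  rw [expTail, expTail, Finset.sum_range_succ, sub_add_eq_sub_sub]

theorem expTail_two_neg (w : ℂ) : expTail 2 (-w) = exp (-w) - 1 + w := by
  rw [expTail_succ, expTail_succ, expTail_zero_left]
  simp

theorem expTail_succ_zero (n : ℕ) : expTail (n + 1) 0 = 0 := by
  induction n with
  | zero => simp [expTail]
  | succ n ih => rw [expTail_succ, ih]; simp

theorem hasDerivAt_expTail_succ (n : ℕ) (w : ℂ) :
    HasDerivAt (expTail (n + 1)) (expTail n w) w := by
  induction n with
  | zero =>
    have h : expTail (0 + 1) = fun w => exp w - 1 := by ext w; simp [expTail]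
    rw [h, expTail_zero_left]
    exact (hasDerivAt_exp w).sub_const 1
  | succ n ih =>
    have h : expTail (n + 1 + 1) = fun w => expTail (n + 1) w - w ^ (n + 1) / (n + 1).factorial :=
      funext (expTail_succ (n + 1))
    rw [h, expTail_succ]
    refine ih.fun_sub (((hasDerivAt_pow (n + 1) w).div_const _).congr_deriv ?_)
    rw [Nat.factorial_succ, Nat.add_sub_cancel]
    push_cast
    exact mul_div_mul_left _ _ (Nat.cast_add_one_ne_zero n)

@[fun_prop]
theorem continuous_expTail (n : ℕ) : Continuous (expTail n) := by
  unfold expTail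
  fun_prop

theorem hasDerivAt_expTail_succ_comp_mul_ofReal (n : ℕ) (c : ℂ) (t : ℝ) :
    HasDerivAt (fun t : ℝ => expTail (n + 1) (c * t)) (c * expTail n (c * t)) t := by
  have inner : HasDerivAt (fun t : ℝ => c * (t : ℂ)) c t := by
    simpa using ofRealCLM.hasDerivAt.const_mul c
  simpa only [mul_comm c (expTail n _)] using! (hasDerivAt_expTail_succ n _).comp t inner

theorem norm_expTail_le (n : ℕ) {w : ℂ} (hw : w.re ≤ 0) :
    ‖expTail n w‖ ≤ ‖w‖ ^ n / n.factorial := by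
  induction n generalizing w with
  | zero => simpa [expTail_zero_left, norm_exp] using hw
  | succ n ih =>
    have majorant_deriv (t : ℝ) :
        HasDerivAt (fun t : ℝ => ‖w‖ ^ (n + 1) * t ^ (n + 1) / (n + 1).factorial)
          (‖w‖ ^ (n + 1) * t ^ n / n.factorial) t := by
      refine (((hasDerivAt_pow (n + 1) t).const_mul _).div_const _).congr_deriv ?_
      rw [Nat.factorial_succ, Nat.add_sub_cancel]
      push_cast
      field_simp
    have deriv_le (t : ℝ) (ht : t ∈ Ico (0 : ℝ) 1) :
        ‖w * expTail n (w * t)‖ ≤ ‖w‖ ^ (n + 1) * t ^ n / n.factorial := by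
      have hre : (w * t).re ≤ 0 := by
        simpa using mul_nonpos_of_nonpos_of_nonneg hw ht.1
      calc ‖w * expTail n (w * t)‖ ≤ ‖w‖ * (‖w * t‖ ^ n / n.factorial) := by
            rw [norm_mul]; gcongr; exact ih hre
        _ = ‖w‖ ^ (n + 1) * t ^ n / n.factorial := by
            rw [norm_mul, norm_real, Real.norm_of_nonneg ht.1]; ring
    have hasDeriv := hasDerivAt_expTail_succ_comp_mul_ofReal n w
    simpa using image_norm_le_of_norm_deriv_right_le_deriv_boundary (a := 0) (b := 1)
      (fun t _ => (hasDeriv t).continuousAt.continuousWithinAt)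
      (fun t _ => (hasDeriv t).hasDerivWithinAt) (by simp [expTail_succ_zero])
      majorant_deriv deriv_le (right_mem_Icc.mpr zero_le_one)

/-- The bound for `expTail (n + 1) w` in the left half-plane, as a function of `x = ‖w‖`: the first
term is sharp near `0`, the second one at infinity. -/
noncomputable def expTailMajorant (n : ℕ) (x : ℝ) : ℝ :=
  min (x ^ (n + 1) / (n + 1).factorial) (2 * x ^ n / n.factorial)

theorem expTailMajorant_nonneg (n : ℕ) {x : ℝ} (hx : 0 ≤ x) : 0 ≤ expTailMajorant n x :=
  le_min (by positivity) (by positivity)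

theorem expTailMajorant_mono (n : ℕ) {x y : ℝ} (hx : 0 ≤ x) (hxy : x ≤ y) :
    expTailMajorant n x ≤ expTailMajorant n y := by
  unfold expTailMajorant
  gcongr

theorem norm_expTail_succ_le_majorant (n : ℕ) {w : ℂ} (hw : w.re ≤ 0) :
    ‖expTail (n + 1) w‖ ≤ expTailMajorant n ‖w‖ := by
  refine le_min (norm_expTail_le (n + 1) hw) ?_
  calc ‖expTail (n + 1) w‖ ≤ ‖expTail n w‖ + ‖w ^ n / n.factorial‖ := by
        rw [expTail_succ]; exact norm_sub_le _ _
    _ ≤ ‖w‖ ^ n / n.factorial + ‖w‖ ^ n / n.factorial := by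
        gcongr
        · exact norm_expTail_le n hw
        · simp
    _ = 2 * ‖w‖ ^ n / n.factorial := by ring

theorem norm_expTail_succ_neg_mul_ofReal_le (n : ℕ) {z : ℂ} (hz : 0 ≤ z.re) {R y : ℝ}
    (hR : ‖z‖ ≤ R) (hy : 0 ≤ y) :
    ‖expTail (n + 1) (-z * y)‖ ≤ expTailMajorant n (R * y) := by
  have hre : (-z * y).re ≤ 0 := by simpa using mul_nonneg hz hy
  have hnorm : ‖-z * y‖ = ‖z‖ * y := by simp [abs_of_nonneg hy]
  refine (norm_expTail_succ_le_majorant n hre).trans ?_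
  rw [hnorm]
  exact expTailMajorant_mono n (by positivity) (by gcongr)

theorem expTailMajorant_mul_isBigO_atTop (n : ℕ) {R : ℝ} (hR : 0 ≤ R) :
    (fun y => expTailMajorant n (R * y)) =O[atTop] fun y => y ^ (-(-n : ℝ)) := by
  refine IsBigO.of_bound (2 * R ^ n / n.factorial) ?_
  filter_upwards [eventually_ge_atTop 0] with y hy
  rw [neg_neg, Real.rpow_natCast, Real.norm_of_nonneg (pow_nonneg hy n),
    Real.norm_of_nonneg (expTailMajorant_nonneg n (by positivity))]
  exact (min_le_right _ _).trans_eq (by ring)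

theorem expTailMajorant_mul_isBigO_zero (n : ℕ) {R : ℝ} (hR : 0 ≤ R) :
    (fun y => expTailMajorant n (R * y)) =O[𝓝[>] 0] fun y => y ^ (-(-(n + 1) : ℝ)) := by
  refine IsBigO.of_bound (R ^ (n + 1) / (n + 1).factorial) ?_
  filter_upwards [self_mem_nhdsWithin] with y (hy : 0 < y)
  rw [neg_neg, ← Nat.cast_add_one, Real.rpow_natCast, Real.norm_of_nonneg (pow_nonneg hy.le _),
    Real.norm_of_nonneg (expTailMajorant_nonneg n (by positivity))]
  exact (min_le_left _ _).trans_eq (by ring)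

theorem integrableOn_rpow_mul_expTailMajorant (n : ℕ) {σ R : ℝ}
    (hσ : σ ∈ Ioo (-(n + 1) : ℝ) (-n)) (hR : 0 ≤ R) :
    IntegrableOn (fun y : ℝ => y ^ (σ - 1) * expTailMajorant n (R * y)) (Ioi 0) := by
  have hcont : Continuous fun y => expTailMajorant n (R * y) := by
    unfold expTailMajorant; fun_prop
  exact mellin_convergent_of_isBigO_scalar (hcont.locallyIntegrable.locallyIntegrableOn _)
    (expTailMajorant_mul_isBigO_atTop n hR) hσ.2 (expTailMajorant_mul_isBigO_zero n hR) hσ.1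

theorem expTail_succ_isBigO_majorant (n : ℕ) {z : ℂ} (hz : 0 ≤ z.re) {l : Filter ℝ}
    (hl : ∀ᶠ y in l, 0 ≤ y) :
    (fun y : ℝ => expTail (n + 1) (-z * y)) =O[l] fun y => expTailMajorant n (‖z‖ * y) := by
  refine IsBigO.of_bound' (hl.mono fun y hy => ?_)
  exact (norm_expTail_succ_neg_mul_ofReal_le n hz le_rfl hy).trans (Real.le_norm_self _)

theorem expTail_succ_isBigO_atTop (n : ℕ) {z : ℂ} (hz : 0 ≤ z.re) :
    (fun y : ℝ => expTail (n + 1) (-z * y)) =O[atTop] fun y => y ^ (-(-n : ℝ)) :=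
  (expTail_succ_isBigO_majorant n hz (eventually_ge_atTop 0)).trans
    (expTailMajorant_mul_isBigO_atTop n (norm_nonneg z))

theorem expTail_succ_isBigO_zero (n : ℕ) {z : ℂ} (hz : 0 ≤ z.re) :
    (fun y : ℝ => expTail (n + 1) (-z * y)) =O[𝓝[>] 0] fun y => y ^ (-(-(n + 1) : ℝ)) :=
  (expTail_succ_isBigO_majorant n hz (eventually_mem_nhdsWithin.mono fun _ => le_of_lt)).trans
    (expTailMajorant_mul_isBigO_zero n (norm_nonneg z))

theorem mellinConvergent_expTail_succ (n : ℕ) {s : ℂ} (hs : s.re ∈ Ioo (-(n + 1) : ℝ) (-n))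
    {z : ℂ} (hz : 0 ≤ z.re) :
    MellinConvergent (fun y : ℝ => expTail (n + 1) (-z * y)) s := by
  have hcont : Continuous fun y : ℝ => expTail (n + 1) (-z * y) := by fun_prop
  exact mellinConvergent_of_isBigO_rpow (hcont.locallyIntegrable.locallyIntegrableOn _)
    (expTail_succ_isBigO_atTop n hz) hs.2 (expTail_succ_isBigO_zero n hz) hs.1

theorem continuousOn_mellin_expTail_succ (n : ℕ) {s : ℂ}
    (hs : s.re ∈ Ioo (-(n + 1) : ℝ) (-n)) :
    ContinuousOn (fun z : ℂ => mellin (fun y : ℝ => expTail (n + 1) (-z * y)) s)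
      {z | 0 ≤ z.re} := by
  intro z₀ _
  have norm_le : ∀ᶠ z in 𝓝[{z | 0 ≤ z.re}] z₀, ‖z‖ ≤ ‖z₀‖ + 1 :=
    nhdsWithin_le_nhds <| continuous_norm.continuousAt.eventually_le_const (lt_add_one _)
  refine continuousWithinAt_of_dominated
    (bound := fun y => y ^ (s.re - 1) * expTailMajorant n ((‖z₀‖ + 1) * y)) ?_ ?_
    (integrableOn_rpow_mul_expTailMajorant n hs (by positivity)) ?_
  · filter_upwards [self_mem_nhdsWithin] with z hz
    exact (mellinConvergent_expTail_succ n hs hz).aestronglyMeasurable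
  · filter_upwards [self_mem_nhdsWithin, norm_le] with z hz hzR
    filter_upwards [ae_restrict_mem measurableSet_Ioi] with y (hy : 0 < y)
    rw [norm_smul, norm_cpow_eq_rpow_re_of_pos hy, sub_re, one_re]
    gcongr
    exact norm_expTail_succ_neg_mul_ofReal_le n hz hzR hy.le
  · refine Eventually.of_forall fun y => Continuous.continuousWithinAt ?_
    fun_prop

theorem isBigO_mul_cpow {f : ℝ → ℂ} {l : Filter ℝ} {a : ℝ}
    (hl : ∀ᶠ y in l, 0 < y) (hf : f =O[l] (· ^ (-a))) (s : ℂ) :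
    (fun y : ℝ => f y * (y : ℂ) ^ s) =O[l] fun y => y ^ (s.re - a) := by
  have hpow : (fun y : ℝ => (y : ℂ) ^ s) =O[l] fun y => y ^ s.re := by
    refine IsBigO.of_bound' (hl.mono fun y hy => ?_)
    rw [norm_cpow_eq_rpow_re_of_pos hy]
    exact Real.le_norm_self _
  refine (hf.mul hpow).congr' EventuallyEq.rfl (hl.mono fun y hy => ?_)
  dsimp only
  rw [← Real.rpow_add hy, neg_add_eq_sub]

theorem tendsto_mul_cpow_atTop_zero {f : ℝ → ℂ} {a : ℝ} {s : ℂ}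
    (hf : f =O[atTop] (· ^ (-a))) (hs : s.re < a) :
    Tendsto (fun y : ℝ => f y * (y : ℂ) ^ s) atTop (𝓝 0) := by
  refine (isBigO_mul_cpow (eventually_gt_atTop 0) hf s).trans_tendsto ?_
  simpa only [neg_sub] using tendsto_rpow_neg_atTop (sub_pos.mpr hs)

theorem tendsto_mul_cpow_nhdsGT_zero {f : ℝ → ℂ} {b : ℝ} {s : ℂ}
    (hf : f =O[𝓝[>] 0] (· ^ (-b))) (hs : b < s.re) :
    Tendsto (fun y : ℝ => f y * (y : ℂ) ^ s) (𝓝[>] 0) (𝓝 0) := by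
  have hpos : 0 < s.re - b := sub_pos.mpr hs
  refine (isBigO_mul_cpow eventually_mem_nhdsWithin hf s).trans_tendsto ?_
  simpa only [Real.zero_rpow hpos.ne'] using
    (Real.continuousAt_rpow_const 0 _ (Or.inr hpos.le)).tendsto.mono_left nhdsWithin_le_nhds

theorem mellin_deriv {f f' : ℝ → ℂ} {a b : ℝ} {s : ℂ}
    (hf : ∀ y ∈ Ioi (0 : ℝ), HasDerivAt f (f' y) y)
    (hf_top : f =O[atTop] (· ^ (-a))) (hs_top : s.re < a)
    (hf_bot : f =O[𝓝[>] 0] (· ^ (-b))) (hs_bot : b < s.re)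
    (hf' : MellinConvergent f' (s + 1)) :
    mellin f' (s + 1) = -s * mellin f s := by
  have hpow (y : ℝ) (hy : y ∈ Ioi (0 : ℝ)) :
      HasDerivAt (fun y : ℝ => (y : ℂ) ^ s) (s * (y : ℂ) ^ (s - 1)) y := by
    simpa using ((hasDerivAt_id (y : ℂ)).cpow_const (c := s)
      (ofReal_mem_slitPlane.mpr hy)).comp_ofReal
  have hf_conv : MellinConvergent f s :=
    mellinConvergent_of_isBigO_rpow
      (ContinuousOn.locallyIntegrableOn (HasDerivAt.continuousOn hf)
        measurableSet_Ioi) hf_top hs_top hf_bot hs_bot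
  have by_parts := integral_Ioi_mul_deriv_eq_deriv_mul hf hpow
    (IntegrableOn.congr_fun (hf_conv.const_mul s) (fun y _ => by
      simp only [Pi.mul_apply, smul_eq_mul]; ring) measurableSet_Ioi)
    (IntegrableOn.congr_fun hf' (fun y _ => by
      simp only [Pi.mul_apply, smul_eq_mul, add_sub_cancel_right, mul_comm]) measurableSet_Ioi)
    (tendsto_mul_cpow_nhdsGT_zero hf_bot hs_bot)
    (tendsto_mul_cpow_atTop_zero hf_top hs_top)
  simp only [mellin, smul_eq_mul, add_sub_cancel_right, ← integral_const_mul]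
  calc ∫ y in Ioi (0 : ℝ), (y : ℂ) ^ s * f' y
      = ∫ y in Ioi (0 : ℝ), f' y * (y : ℂ) ^ s := by simp only [mul_comm]
    _ = -∫ y in Ioi (0 : ℝ), f y * (s * (y : ℂ) ^ (s - 1)) := by rw [by_parts]; ring
    _ = ∫ y in Ioi (0 : ℝ), -s * ((y : ℂ) ^ (s - 1) * f y) := by
      rw [← integral_neg]; congr with y; ring

theorem mellinConvergent_exp_neg_mul {s : ℂ} (hs : 0 < s.re) {z : ℂ} (hz : 0 < z.re) :
    MellinConvergent (fun y : ℝ => exp (-z * y)) s := by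
  have hcont : Continuous fun y : ℝ => exp (-z * y) := by fun_prop
  refine mellinConvergent_of_isBigO_rpow_exp (b := 0) hz
    (hcont.locallyIntegrable.locallyIntegrableOn _) (IsBigO.of_norm_le fun y => ?_) ?_ hs
  · simp [norm_exp]
  · simpa using (hcont.continuousAt.isBigO_one ℝ).mono nhdsWithin_le_nhds

theorem differentiableOn_mellin_exp_neg_mul {s : ℂ} (hs : 0 < s.re) :
    DifferentiableOn ℂ (fun z : ℂ => mellin (fun y : ℝ => exp (-z * y)) s) {z | 0 < z.re} := by
  intro z₀ (hz₀ : 0 < z₀.re)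
  obtain ⟨r, hr, hrz⟩ := exists_between hz₀
  have hs' : 0 < (s + 1).re := by rw [add_re, one_re]; linarith
  have hr_re : 0 < (r : ℂ).re := by rwa [ofReal_re]
  have mem_nhds_z₀ : {z : ℂ | r < z.re} ∈ 𝓝 z₀ :=
    (isOpen_lt continuous_const continuous_re).mem_nhds hrz
  have hderiv (y : ℝ) (z : ℂ) : HasDerivAt (fun z : ℂ => (y : ℂ) ^ (s - 1) * exp (-z * y))
      ((y : ℂ) ^ (s - 1) * (exp (-z * y) * -y)) z := by
    simpa using (((hasDerivAt_id z).neg.mul_const (y : ℂ)).cexp).const_mul ((y : ℂ) ^ (s - 1))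
  have hderiv_le : ∀ᵐ y : ℝ ∂volume.restrict (Ioi 0), ∀ z ∈ {z : ℂ | r < z.re},
      ‖(y : ℂ) ^ (s - 1) * (exp (-z * y) * -y)‖
        ≤ ‖(y : ℂ) ^ (s + 1 - 1) • exp (-(r : ℂ) * y)‖ := by
    filter_upwards [ae_restrict_mem measurableSet_Ioi] with y (hy : 0 < y) z (hz : r < z.re)
    have hexp : ‖exp (-z * y)‖ ≤ ‖exp (-(r : ℂ) * y)‖ := by
      simpa [norm_exp] using mul_le_mul_of_nonneg_right hz.le hy.le
    calc ‖(y : ℂ) ^ (s - 1) * (exp (-z * y) * -y)‖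
        = ‖(y : ℂ) ^ (s - 1) * y‖ * ‖exp (-z * y)‖ := by simp only [norm_mul, norm_neg]; ring
      _ ≤ ‖(y : ℂ) ^ (s - 1) * y‖ * ‖exp (-(r : ℂ) * y)‖ := by gcongr
      _ = ‖(y : ℂ) ^ (s + 1 - 1) • exp (-(r : ℂ) * y)‖ := by
          rw [norm_smul, add_sub_right_comm, cpow_add _ _ (ofReal_ne_zero.mpr hy.ne'), cpow_one]
  refine (hasDerivAt_integral_of_dominated_loc_of_deriv_le
    (F := fun z (y : ℝ) => (y : ℂ) ^ (s - 1) • exp (-z * y)) mem_nhds_z₀ ?_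
    (mellinConvergent_exp_neg_mul hs hz₀) ?_ hderiv_le
    (mellinConvergent_exp_neg_mul hs' hr_re).norm
    (Eventually.of_forall fun y z _ => hderiv y z)).2.differentiableAt.differentiableWithinAt
  · filter_upwards [mem_nhds_z₀] with z hz
    exact (mellinConvergent_exp_neg_mul hs (hr.trans hz)).aestronglyMeasurable
  · exact Measurable.aestronglyMeasurable (by fun_prop)

theorem eqOn_re_pos_of_eq_ofReal {f g : ℂ → ℂ} (hf : DifferentiableOn ℂ f {z | 0 < z.re})
    (hg : DifferentiableOn ℂ g {z | 0 < z.re}) (hfg : ∀ x : ℝ, 0 < x → f x = g x) :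
    EqOn f g {z | 0 < z.re} := by
  have hopen : IsOpen {z : ℂ | 0 < z.re} := isOpen_lt continuous_const continuous_re
  refine (hf.analyticOnNhd hopen).eqOn_of_preconnected_of_frequently_eq (hg.analyticOnNhd hopen)
    (convex_halfSpace_re_gt 0).isPreconnected (z₀ := 1) (by simp) ?_
  have ofReal_tendsto : Tendsto (fun x : ℝ => (x : ℂ)) (𝓝[>] 1) (𝓝[≠] 1) := by
    refine tendsto_nhdsWithin_of_tendsto_nhds_of_eventually_within _
      ((continuous_ofReal.tendsto' 1 1 ofReal_one).mono_left nhdsWithin_le_nhds) ?_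
    filter_upwards [self_mem_nhdsWithin] with x (hx : 1 < x)
    exact ofReal_ne_one.mpr hx.ne'
  refine ofReal_tendsto.frequently (Eventually.frequently ?_)
  filter_upwards [self_mem_nhdsWithin] with x (hx : 1 < x)
  exact hfg x (zero_lt_one.trans hx)

theorem hasMellin_exp_neg_mul {s : ℂ} (hs : 0 < s.re) {z : ℂ} (hz : 0 < z.re) :
    HasMellin (fun y : ℝ => exp (-z * y)) s (Gamma s * z ^ (-s)) := by
  refine ⟨mellinConvergent_exp_neg_mul hs hz, ?_⟩
  refine eqOn_re_pos_of_eq_ofReal (g := fun z => Gamma s * z ^ (-s))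
    (differentiableOn_mellin_exp_neg_mul hs) (fun w hw => ?_) (fun x hx => ?_) hz
  · exact ((differentiableAt_id.cpow_const (Or.inl hw)).const_mul _).differentiableWithinAt
  · have harg : (x : ℂ).arg ≠ Real.pi := by
      rw [arg_ofReal_of_nonneg hx.le]; exact Real.pi_ne_zero.symm
    simpa [mellin, cpow_neg, inv_cpow _ _ harg, mul_comm] using
      integral_cpow_mul_exp_neg_mul_Ioi hs hx

theorem hasMellin_expTail_of_re_pos (n : ℕ) {s : ℂ} (hs : s.re ∈ Ioo (-n : ℝ) (1 - n)) {z : ℂ}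
    (hz : 0 < z.re) :
    HasMellin (fun y : ℝ => expTail n (-z * y)) s (Gamma s * z ^ (-s)) := by
  induction n generalizing s with
  | zero =>
    simp only [expTail_zero_left]
    exact hasMellin_exp_neg_mul (by simpa using hs.1) hz
  | succ n ih =>
    push_cast at hs
    have hs_strip : s.re ∈ Ioo (-(n + 1) : ℝ) (-n) := ⟨hs.1, by linarith [hs.2]⟩
    have hs_ne : s ≠ 0 := by
      rintro rfl
      simpa using hs_strip.2.trans_le (neg_nonpos.mpr n.cast_nonneg)
    have hz_ne : z ≠ 0 := by rintro rfl; simp at hz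
    obtain ⟨convergent, value⟩ := ih (s := s + 1)
      ⟨by rw [add_re, one_re]; linarith [hs.1], by rw [add_re, one_re]; linarith [hs.2]⟩
    refine ⟨mellinConvergent_expTail_succ n hs_strip hz.le, ?_⟩
    have recurrence := mellin_deriv
      (fun y _ => hasDerivAt_expTail_succ_comp_mul_ofReal n (-z) y)
      (expTail_succ_isBigO_atTop n hz.le) hs_strip.2
      (expTail_succ_isBigO_zero n hz.le) hs_strip.1 (convergent.const_smul (-z))
    have mellin_derivative := mellin_const_smul (fun y : ℝ => expTail n (-z * y)) (s + 1) (-z)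
    simp only [smul_eq_mul] at mellin_derivative
    refine mul_left_cancel₀ (neg_ne_zero.mpr hs_ne) ?_
    calc -s * mellin (fun y : ℝ => expTail (n + 1) (-z * y)) s
        = -z * (Gamma (s + 1) * z ^ (-(s + 1))) := by rw [← recurrence, mellin_derivative, value]
      _ = -s * (Gamma s * z ^ (-s)) := by
        rw [Gamma_add_one s hs_ne, neg_add', cpow_sub _ _ hz_ne, cpow_one]
        field_simp

theorem hasMellin_expTail_succ (n : ℕ) {s : ℂ} (hs : s.re ∈ Ioo (-(n + 1) : ℝ) (-n)) {z : ℂ}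
    (hz : 0 ≤ z.re) :
    HasMellin (fun y : ℝ => expTail (n + 1) (-z * y)) s (Gamma s * z ^ (-s)) := by
  refine ⟨mellinConvergent_expTail_succ n hs hz, ?_⟩
  have hs_neg : 0 < (-s).re := by
    rw [neg_re]; linarith [hs.2, n.cast_nonneg (α := ℝ)]
  have eq_open : EqOn (fun z : ℂ => mellin (fun y : ℝ => expTail (n + 1) (-z * y)) s)
      (fun z => Gamma s * z ^ (-s)) {z | 0 < z.re} := fun w hw =>
    (hasMellin_expTail_of_re_pos (n + 1)
      ⟨by push_cast; exact hs.1, by push_cast; linarith [hs.2]⟩ hw).2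
  refine eq_open.of_subset_closure (continuousOn_mellin_expTail_succ n hs) (fun w hw => ?_)
    (fun w (hw : 0 < w.re) => hw.le) (closure_setOfPred_lt_re 0).ge hz
  exact ((continuousAt_cpow_const_of_re_pos (Or.inl hw) hs_neg).const_mul _).continuousWithinAt

theorem Gamma_two_sub {α : ℂ} (h₀ : α ≠ 0) (h₁ : α ≠ 1) :
    Gamma (2 - α) = α * (α - 1) * Gamma (-α) := by
  rw [show 2 - α = -α + 1 + 1 by ring,
    Gamma_add_one _ (by rwa [neg_add_eq_sub, sub_ne_zero, ne_comm]),
    Gamma_add_one _ (neg_ne_zero.mpr h₀)]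
  ring

theorem cpow_integral_representation_alpha_gt_one_general {α : ℂ} (hα : α.re ∈ Ioo (1 : ℝ) 2)
    {z : ℂ} (hz : 0 ≤ z.re) :
    IntegrableOn (fun y : ℝ => (exp (-(z * y)) - 1 + z * y) * (y : ℂ) ^ (-α - 1)) (Ioi 0) ∧
    z ^ α = α * (α - 1) / Gamma (2 - α) *
      ∫ y in Ioi (0 : ℝ), (exp (-(z * y)) - 1 + z * y) * (y : ℂ) ^ (-α - 1) := by
  have h₀ : α ≠ 0 := by rintro rfl; simpa using zero_lt_one.trans hα.1
  have h₁ : α ≠ 1 := by rintro rfl; simpa using hα.1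
  have hΓ : Gamma (2 - α) ≠ 0 :=
    Gamma_ne_zero_of_re_pos (by rw [sub_re, re_ofNat]; linarith [hα.2])
  obtain ⟨convergent, value⟩ := hasMellin_expTail_succ 1 (s := -α)
    ⟨by rw [neg_re]; norm_num; exact hα.2, by rw [neg_re]; norm_num; exact hα.1⟩ hz
  simp only [MellinConvergent, mellin, one_add_one_eq_two, neg_mul, expTail_two_neg, smul_eq_mul,
    mul_comm ((_ : ℂ) ^ (-α - 1)), neg_neg] at convergent value
  refine ⟨convergent, ?_⟩
  rw [value, ← mul_assoc, div_mul_eq_mul_div, ← Gamma_two_sub h₀ h₁, div_self hΓ, one_mul]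

/-- For `α ∈ (1,2)` and `z ∈ ℂ` with `Re z ≥ 0`, with `z^α` the principal branch
of the complex power, `z^α = (α(α−1)/Γ(2−α))·∫₀^∞ (e^{−zy} − 1 + zy)·y^{−α−1} dy`,
the integral being absolutely convergent. -/
theorem cpow_integral_representation_alpha_gt_one (α : ℝ) (hα : α ∈ Set.Ioo (1:ℝ) 2)
    (z : ℂ) (hz : 0 ≤ z.re) :
    IntegrableOn (fun y : ℝ =>
        (Complex.exp (-(z * (y : ℂ))) - 1 + z * (y : ℂ)) * ((y ^ (-α - 1) : ℝ) : ℂ)) (Set.Ioi 0) ∧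
    z ^ (α : ℂ) = ((α * (α - 1) / Real.Gamma (2 - α) : ℝ) : ℂ) *
      ∫ y in Set.Ioi (0:ℝ),
        (Complex.exp (-(z * (y : ℂ))) - 1 + z * (y : ℂ)) * ((y ^ (-α - 1) : ℝ) : ℂ) := by
  have kernel_eq : EqOn
      (fun y : ℝ => (exp (-(z * y)) - 1 + z * y) * ((y ^ (-α - 1) : ℝ) : ℂ))
      (fun y : ℝ => (exp (-(z * y)) - 1 + z * y) * (y : ℂ) ^ (-(α : ℂ) - 1)) (Ioi 0) :=
    fun y (hy : 0 < y) => by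
      simp only [ofReal_cpow hy.le, ofReal_sub, ofReal_neg, ofReal_one]
  rw [integrableOn_congr_fun kernel_eq measurableSet_Ioi,
    setIntegral_congr_fun measurableSet_Ioi kernel_eq]
  simpa [← Gamma_ofReal] using cpow_integral_representation_alpha_gt_one_general (α := α) hα hz
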